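/- Let G be a proper real-rational n×n transfer function matrix that is negative imaginary (NI) and has no poles at the origin. Then G(0) = G(0)^T, G(∞) = G(∞)^T, and G(0) ≥ G(∞) in the Loewner (positive-semidefinite) order, where G(∞) = lim_{s→∞} G(s). -/

import Mathlib

open Matrix Polynomial Filter Topology
open scoped ComplexOrder

noncomputable section

namespace NIControl

/-- Evaluate a real-rational function at a complex point (junk value at poles). -/
def evalC (f : RatFunc ℝ) (s : ℂ) : ℂ :=
  f.eval (algebraMap ℝ ℂ) s

/-- `s` is a pole of the real-rational function `f`
(the reduced denominator vanishes at `s`). -/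
def IsPoleAt (f : RatFunc ℝ) (s : ℂ) : Prop :=
  f.denom.eval₂ (algebraMap ℝ ℂ) s = 0

variable {n : ℕ}

/-- Pointwise evaluation of a real-rational transfer matrix at a complex point. -/
def evalM (G : Matrix (Fin n) (Fin n) (RatFunc ℝ)) (s : ℂ) : Matrix (Fin n) (Fin n) ℂ :=
  Matrix.of fun i j => evalC (G i j) s

/-- Pointwise evaluation of a real-rational transfer matrix at a real point. -/
def evalR (G : Matrix (Fin n) (Fin n) (RatFunc ℝ)) (x : ℝ) : Matrix (Fin n) (Fin n) ℝ :=
  Matrix.of fun i j => (G i j).eval (RingHom.id ℝ) x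

/-- Value at `s = ∞` of a proper real-rational function. -/
def atInfinity (f : RatFunc ℝ) : ℝ :=
  if f.num.degree = f.denom.degree then f.num.leadingCoeff / f.denom.leadingCoeff else 0

/-- The instantaneous gain `G(∞)` of a proper real-rational transfer matrix. -/
def evalInf (G : Matrix (Fin n) (Fin n) (RatFunc ℝ)) : Matrix (Fin n) (Fin n) ℝ :=
  Matrix.of fun i j => atInfinity (G i j)

/-- The matrix `G` has a pole at `s`. -/
def HasPole (G : Matrix (Fin n) (Fin n) (RatFunc ℝ)) (s : ℂ) : Prop :=
  ∃ i j, IsPoleAt (G i j) s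

/-- All entries of `G` are proper rational functions. -/
def Proper (G : Matrix (Fin n) (Fin n) (RatFunc ℝ)) : Prop :=
  ∀ i j, (G i j).num.degree ≤ (G i j).denom.degree

/-- All entries of `G` are strictly proper rational functions. -/
def StrictlyProper (G : Matrix (Fin n) (Fin n) (RatFunc ℝ)) : Prop :=
  ∀ i j, (G i j).num.degree < (G i j).denom.degree

/-- The pole of `G` at the origin (if any) is at most simple. -/
def NoDoubleOriginPole (G : Matrix (Fin n) (Fin n) (RatFunc ℝ)) : Prop :=
  ∀ i j, (G i j).denom.rootMultiplicity 0 ≤ 1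

/-- Membership in `RH∞`: proper and no poles in the closed right-half complex plane. -/
def MemRHinf {m : Type*} [Fintype m] (G : Matrix m m (RatFunc ℝ)) : Prop :=
  (∀ i j, (G i j).num.degree ≤ (G i j).denom.degree) ∧
  ∀ s : ℂ, 0 ≤ s.re → ∀ i j, ¬ IsPoleAt (G i j) s

/-- The point `jω` on the imaginary axis. -/
def jw (ω : ℝ) : ℂ := Complex.I * (ω : ℂ)

/-- The negative-imaginary frequency kernel `j (M − M*)`. -/
def niKer (M : Matrix (Fin n) (Fin n) ℂ) : Matrix (Fin n) (Fin n) ℂ :=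
  Complex.I • (M - Mᴴ)

/-- Negative imaginary (NI) real-rational transfer matrix. -/
def IsNI (G : Matrix (Fin n) (Fin n) (RatFunc ℝ)) : Prop :=
  Proper G ∧
  (∀ s : ℂ, 0 < s.re → ¬ HasPole G s) ∧
  (∀ ω : ℝ, 0 < ω → ¬ HasPole G (jw ω) → (niKer (evalM G (jw ω))).PosSemidef) ∧
  (∀ ω : ℝ, 0 < ω → HasPole G (jw ω) →
    ∃ R : Matrix (Fin n) (Fin n) ℂ, R.PosSemidef ∧
      Tendsto (fun s : ℂ => (s - jw ω) • Complex.I • evalM G s) (𝓝[≠] jw ω) (𝓝 R)) ∧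
  (HasPole G 0 →
    (∀ k : ℕ, 3 ≤ k → Tendsto (fun s : ℂ => s ^ k • evalM G s) (𝓝[≠] 0) (𝓝 0)) ∧
    ∃ R : Matrix (Fin n) (Fin n) ℂ, R.PosSemidef ∧
      Tendsto (fun s : ℂ => s ^ 2 • evalM G s) (𝓝[≠] 0) (𝓝 R))

/-- Strictly negative imaginary (SNI) real-rational transfer matrix. -/
def IsSNI (G : Matrix (Fin n) (Fin n) (RatFunc ℝ)) : Prop :=
  MemRHinf G ∧ ∀ ω : ℝ, 0 < ω → (niKer (evalM G (jw ω))).PosDef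

/-- Positive real (passive) real-rational transfer matrix. -/
def IsPositiveReal (G : Matrix (Fin n) (Fin n) (RatFunc ℝ)) : Prop :=
  MemRHinf G ∧ ∀ ω : ℝ, 0 ≤ ω → (evalM G (jw ω) + (evalM G (jw ω))ᴴ).PosSemidef

/-- Output strictly passive real-rational transfer matrix. -/
def IsOSP (G : Matrix (Fin n) (Fin n) (RatFunc ℝ)) : Prop :=
  MemRHinf G ∧ ∃ ε : ℝ, 0 < ε ∧ ∀ ω : ℝ, 0 ≤ ω →
    (evalM G (jw ω) + (evalM G (jw ω))ᴴ -
      (ε : ℂ) • ((evalM G (jw ω))ᴴ * evalM G (jw ω))).PosSemidef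

/-- Stability of the positive feedback interconnection `[P, C]`:
`[I; C] (I − P C)⁻¹ [I, P] ∈ RH∞`. -/
def FeedbackStable (P C : Matrix (Fin n) (Fin n) (RatFunc ℝ)) : Prop :=
  ((1 : Matrix (Fin n) (Fin n) (RatFunc ℝ)) - P * C).det ≠ 0 ∧
  MemRHinf (Matrix.fromBlocks
    (1 - P * C)⁻¹ ((1 - P * C)⁻¹ * P)
    (C * (1 - P * C)⁻¹) (C * (1 - P * C)⁻¹ * P))

/-- All eigenvalues of the complex matrix `M` are real and less than `c`. -/
def eigsRealAndLT (M : Matrix (Fin n) (Fin n) ℂ) (c : ℝ) : Prop :=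
  ∀ μ ∈ spectrum ℂ M, μ.im = 0 ∧ μ.re < c

/-- The (real) eigenvalues of the real matrix `M` are all real and its largest
eigenvalue is less than `c`. -/
def maxEigLT (M : Matrix (Fin n) (Fin n) ℝ) (c : ℝ) : Prop :=
  eigsRealAndLT (M.map (Complex.ofReal)) c

/-- Loewner order `A ≤ B` on real matrices. -/
def LoewnerLE (A B : Matrix (Fin n) (Fin n) ℝ) : Prop := (B - A).PosSemidef

/-- Strict Loewner order `A < B` on real matrices. -/
def LoewnerLT (A B : Matrix (Fin n) (Fin n) ℝ) : Prop := (B - A).PosDef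

/-!
The matrix `j (G(jω) - G(jω)*)` is positive semidefinite for all but finitely many `ω > 0`, hence so
are its limits as `ω → 0⁺` and `ω → ∞`. There `G` is real, so the limits have trace zero and vanish,
which is the symmetry of `G(0)` and `G(∞)`.

For the inequality, fix a real vector `x` and put `F(s) = s xᵀ (G(s) - G(∞)) x`. This function is
bounded near infinity, has nonnegative real part on the imaginary axis away from its poles, and its
poles there are simple with nonnegative residue, so `Re F` stays bounded below when such a pole is
approached from the right half-plane. If `q` is a bounded holomorphic function on the right
half-plane that vanishes at these poles, then `|exp (-N F) q| ≤ sup |q|` on the imaginary axis, and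
by the Phragmén–Lindelöf principle on the whole right half-plane, for every `N`. Letting `N → ∞`
gives `Re F ≥ 0`. At `s = t > 0` this says `xᵀ (G(t) - G(∞)) x ≥ 0`; now let `t → 0⁺`.
-/

section RightHalfPlane

open Bornology Complex

variable {α : Type*} {l : Filter α} {g q : ℂ → ℂ} {K t : ℝ}

lemma isBoundedUnder_ge_re_of_isBigO_one {g : α → ℂ} (hg : g =O[l] fun _ => (1 : ℝ)) :
    l.IsBoundedUnder (· ≥ ·) fun a => (g a).re := by
  obtain ⟨C, hC⟩ := hg.bound
  refine ⟨-C, eventually_map.2 (hC.mono fun a ha => ?_)⟩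
  exact (abs_le.1 ((abs_re_le_norm _).trans (by simpa using ha))).1

lemma isBoundedUnder_norm_exp_neg_mul {g : α → ℂ} (ht : 0 ≤ t)
    (hg : l.IsBoundedUnder (· ≥ ·) fun a => (g a).re) :
    l.IsBoundedUnder (· ≤ ·) (norm ∘ fun a => exp (-(t * g a))) := by
  obtain ⟨c, hc⟩ := hg
  refine ⟨Real.exp (-(t * c)), ?_⟩
  rw [eventually_map] at hc ⊢
  filter_upwards [hc] with a ha
  have hmul : t * c ≤ t * (g a).re := mul_le_mul_of_nonneg_left ha ht
  simpa [norm_exp] using hmul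

lemma diffContOnCl_exp_neg_mul_mul (ht : 0 ≤ t)
    (hq : DiffContOnCl ℂ q {z | 0 < z.re}) (hg : DifferentiableOn ℂ g {z | 0 < z.re})
    (hcont : ∀ p, p.re = 0 → q p ≠ 0 → ContinuousWithinAt g {z | 0 ≤ z.re} p)
    (hbdd : ∀ p, p.re = 0 → q p = 0 →
      (𝓝[{z | 0 ≤ z.re} \ {p}] p).IsBoundedUnder (· ≥ ·) fun z => (g z).re) :
    DiffContOnCl ℂ (fun z => exp (-(t * g z)) * q z) {z | 0 < z.re} := by
  refine ⟨((hg.const_mul _).neg.cexp).mul hq.differentiableOn, ?_⟩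
  have hqc := hq.continuousOn
  rw [closure_setOfPred_lt_re] at hqc ⊢
  intro p (hp : 0 ≤ p.re)
  rcases hp.lt_or_eq with hpos | hzero
  · have hgp : ContinuousWithinAt g {z | 0 ≤ z.re} p :=
      (hg.differentiableAt ((isOpen_lt continuous_const continuous_re).mem_nhds
        hpos)).continuousAt.continuousWithinAt
    exact ((hgp.const_mul _).neg.cexp).mul (hqc p hp)
  by_cases hqp : q p = 0
  · rw [← continuousWithinAt_sdiff_self]
    have hq0 : Tendsto q (𝓝[{z | 0 ≤ z.re} \ {p}] p) (𝓝 0) :=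
      hqp ▸ (hqc p hp).mono_left (nhdsWithin_mono _ Set.sdiff_subset)
    simpa [ContinuousWithinAt, hqp] using isBoundedUnder_le_mul_tendsto_zero
      (isBoundedUnder_norm_exp_neg_mul ht (hbdd p hzero.symm hqp)) hq0
  · exact (((hcont p hzero.symm hqp).const_mul _).neg.cexp).mul (hqc p hp)

lemma norm_exp_neg_mul_mul_le (ht : 0 ≤ t)
    (hq : DiffContOnCl ℂ q {z | 0 < z.re}) (hqK : ∀ z, 0 ≤ z.re → ‖q z‖ ≤ K)
    (hg : DifferentiableOn ℂ g {z | 0 < z.re})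
    (hcont : ∀ p, p.re = 0 → q p ≠ 0 → ContinuousWithinAt g {z | 0 ≤ z.re} p)
    (haxis : ∀ p, p.re = 0 → q p ≠ 0 → 0 ≤ (g p).re)
    (hbdd : ∀ p, p.re = 0 → q p = 0 →
      (𝓝[{z | 0 ≤ z.re} \ {p}] p).IsBoundedUnder (· ≥ ·) fun z => (g z).re)
    (hinf : (cobounded ℂ ⊓ 𝓟 {z | 0 ≤ z.re}).IsBoundedUnder (· ≥ ·) fun z => (g z).re)
    {z : ℂ} (hz : 0 ≤ z.re) :
    ‖exp (-(t * g z)) * q z‖ ≤ K := by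
  set h : ℂ → ℂ := fun z => exp (-(t * g z)) * q z
  have hO : h =O[cobounded ℂ ⊓ 𝓟 {z | 0 ≤ z.re}] fun _ => (1 : ℝ) := by
    have hqO : q =O[cobounded ℂ ⊓ 𝓟 {z | 0 ≤ z.re}] fun _ => (1 : ℝ) :=
      .of_bound K <| (eventually_inf_principal.2 (.of_forall hqK)).mono fun _ h => by simpa using h
    simpa only [h, one_mul] using ((isBoundedUnder_norm_exp_neg_mul ht hinf).isBigO_one ℝ).mul hqO
  refine PhragmenLindelof.right_half_plane_of_bounded_on_real (f := h)
    (diffContOnCl_exp_neg_mul_mul ht hq hg hcont hbdd) ⟨1, one_lt_two, 0, ?_⟩ ?_ ?_ hz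
  · have hsub : {z : ℂ | 0 < z.re} ⊆ {z | 0 ≤ z.re} := fun z (hz : 0 < z.re) => hz.le
    simpa using hO.mono (inf_le_inf_left _ (principal_mono.2 hsub))
  · have hreal : Tendsto ((↑) : ℝ → ℂ) atTop (cobounded ℂ ⊓ 𝓟 {z | 0 ≤ z.re}) :=
      tendsto_inf.2 ⟨RCLike.tendsto_ofReal_atTop_cobounded ℂ,
        tendsto_principal.2 <| (eventually_ge_atTop 0).mono fun x hx => by simpa using hx⟩
    exact (hO.comp_tendsto hreal).isBoundedUnder_le
  · intro ω
    have hω : (ω * I : ℂ).re = 0 := by simp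
    by_cases hqω : q (ω * I) = 0
    · simpa [h, hqω] using (norm_nonneg _).trans (hqK 0 le_rfl)
    · calc ‖h (ω * I)‖ = Real.exp (-(t * (g (ω * I)).re)) * ‖q (ω * I)‖ := by
            simp [h, norm_exp]
        _ ≤ 1 * ‖q (ω * I)‖ := by
            gcongr
            simpa using mul_nonneg ht (haxis _ hω hqω)
        _ ≤ K := by simpa using hqK _ hω.ge

lemma re_nonneg_of_forall_norm_exp_neg_mul_mul_le {w v : ℂ} (hv : v ≠ 0)
    (h : ∀ N : ℕ, ‖exp (-(N * w)) * v‖ ≤ K) : 0 ≤ w.re := by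
  by_contra! hw
  have hlim : Tendsto (fun N : ℕ => Real.exp (N * -w.re) * ‖v‖) atTop atTop :=
    (Real.tendsto_exp_atTop.comp <| tendsto_natCast_atTop_atTop.atTop_mul_const
      (neg_pos.2 hw)).atTop_mul_const (norm_pos_iff.2 hv)
  obtain ⟨N, hN⟩ := (hlim.eventually_gt_atTop K).exists
  refine hN.not_ge ?_
  simpa [norm_exp] using h N

/-- A bounded holomorphic function on the closed right half-plane that vanishes there exactly on
`S`; it absorbs the boundary singularities of a function to which the Phragmén–Lindelöf principle
is to be applied. -/
def zeroWeight (S : Finset ℂ) (z : ℂ) : ℂ :=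
  ∏ p ∈ S, (z - p) / (z + 1)

lemma one_le_norm_add_one {z : ℂ} (hz : 0 ≤ z.re) : 1 ≤ ‖z + 1‖ :=
  calc (1 : ℝ) ≤ (z + 1).re := by simpa using hz
    _ ≤ ‖z + 1‖ := re_le_norm _

lemma add_one_ne_zero_of_re_nonneg {z : ℂ} (hz : 0 ≤ z.re) : z + 1 ≠ 0 :=
  norm_pos_iff.1 (one_pos.trans_le (one_le_norm_add_one hz))

lemma zeroWeight_eq_zero_iff {S : Finset ℂ} {z : ℂ} (hz : 0 ≤ z.re) :
    zeroWeight S z = 0 ↔ z ∈ S := by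
  simp [zeroWeight, Finset.prod_eq_zero_iff, add_one_ne_zero_of_re_nonneg hz, sub_eq_zero]

lemma differentiableAt_zeroWeight (S : Finset ℂ) {z : ℂ} (hz : 0 ≤ z.re) :
    DifferentiableAt ℂ (zeroWeight S) z := by
  have hne := add_one_ne_zero_of_re_nonneg hz
  unfold zeroWeight
  fun_prop (disch := assumption)

lemma norm_zeroWeight_le (S : Finset ℂ) {z : ℂ} (hz : 0 ≤ z.re) :
    ‖zeroWeight S z‖ ≤ ∏ p ∈ S, (1 + ‖1 + p‖) := by
  have h1 := one_le_norm_add_one hz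
  rw [zeroWeight, norm_prod]
  refine Finset.prod_le_prod (fun _ _ => norm_nonneg _) fun p _ => ?_
  rw [norm_div, div_le_iff₀ (one_pos.trans_le h1)]
  calc ‖z - p‖ = ‖(z + 1) - (1 + p)‖ := by ring_nf
    _ ≤ ‖z + 1‖ + ‖1 + p‖ := norm_sub_le _ _
    _ ≤ ‖z + 1‖ + ‖1 + p‖ * ‖z + 1‖ := by gcongr; exact le_mul_of_one_le_right (norm_nonneg _) h1
    _ = (1 + ‖1 + p‖) * ‖z + 1‖ := by ring

theorem re_nonneg_of_re_nonneg_on_imaginaryAxis {S : Set ℂ} (hS : S.Finite)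
    (hSre : ∀ p ∈ S, p.re ≤ 0)
    (hg : ∀ z, 0 ≤ z.re → z ∉ S → DifferentiableAt ℂ g z)
    (haxis : ∀ p ∉ S, p.re = 0 → 0 ≤ (g p).re)
    (hbdd : ∀ p ∈ S, p.re = 0 →
      (𝓝[{z | 0 ≤ z.re} \ {p}] p).IsBoundedUnder (· ≥ ·) fun z => (g z).re)
    (hinf : (cobounded ℂ ⊓ 𝓟 {z | 0 ≤ z.re}).IsBoundedUnder (· ≥ ·) fun z => (g z).re)
    {z : ℂ} (hz : 0 < z.re) : 0 ≤ (g z).re := by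
  lift S to Finset ℂ using hS
  have hmem {p : ℂ} (hp : p.re = 0) : zeroWeight S p = 0 ↔ p ∈ S := zeroWeight_eq_zero_iff hp.ge
  have hnot {z : ℂ} (hz : 0 < z.re) : z ∉ S := fun hzS => (hSre z hzS).not_gt hz
  have hq : DiffContOnCl ℂ (zeroWeight S) {z | 0 < z.re} := by
    refine DifferentiableOn.diffContOnCl fun z hz => ?_
    rw [closure_setOfPred_lt_re] at hz
    exact (differentiableAt_zeroWeight S hz).differentiableWithinAt
  refine re_nonneg_of_forall_norm_exp_neg_mul_mul_le (K := ∏ p ∈ S, (1 + ‖1 + p‖))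
    (mt (zeroWeight_eq_zero_iff hz.le).1 (hnot hz)) fun N => ?_
  exact_mod_cast norm_exp_neg_mul_mul_le (t := N) N.cast_nonneg hq
    (fun _ => norm_zeroWeight_le S)
    (fun z hz => (hg z (le_of_lt hz) (hnot hz)).differentiableWithinAt)
    (fun p hp hqp => (hg p hp.ge (mt (hmem hp).2 hqp)).continuousAt.continuousWithinAt)
    (fun p hp hqp => haxis p (mt (hmem hp).2 hqp) hp)
    (fun p hp hqp => hbdd p ((hmem hp).1 hqp) hp) hinf hz.le

end RightHalfPlane

section SimplePole

open scoped ComplexConjugate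

variable {g : ℂ → ℂ} {p : ℂ}

lemma isBigO_one_sub_div_of_tendsto_sub_mul {a : ℂ}
    (hg : ∀ᶠ z in 𝓝[≠] p, DifferentiableAt ℂ g z)
    (ha : Tendsto (fun z => (z - p) * g z) (𝓝[≠] p) (𝓝 a)) :
    (fun z => g z - a / (z - p)) =O[𝓝[≠] p] fun _ => (1 : ℝ) := by
  have hne : ∀ᶠ z in 𝓝[≠] p, z - p ≠ 0 :=
    eventually_mem_nhdsWithin.mono fun z hz => sub_ne_zero.2 hz
  have hlittle : (fun z => g z - a / (z - p)) =o[𝓝[≠] p] fun z => (z - p)⁻¹ := by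
    rw [Asymptotics.isLittleO_iff_tendsto' (hne.mono fun z hz h => absurd h (inv_ne_zero hz))]
    refine (sub_self a ▸ ha.sub_const a).congr' (hne.mono fun z hz => ?_)
    field_simp
  have hdiff : ∀ᶠ z in 𝓝[≠] p, DifferentiableAt ℂ (fun z => g z - a / (z - p)) z := by
    filter_upwards [hg, hne] with z hz hzp
    fun_prop (disch := assumption)
  exact (Complex.tendsto_limUnder_of_differentiable_on_punctured_nhds_of_isLittleO hdiff
    (hlittle.sub isBoundedUnder_const.isLittleO_sub_self_inv)).isBigO_one ℝ

lemma isBoundedUnder_ge_re_of_tendsto_sub_mul {a : ℝ} (ha : 0 ≤ a)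
    (hg : ∀ᶠ z in 𝓝[≠] p, DifferentiableAt ℂ g z)
    (hlim : Tendsto (fun z => (z - p) * g z) (𝓝[≠] p) (𝓝 (a : ℂ))) :
    (𝓝[{z | p.re ≤ z.re} \ {p}] p).IsBoundedUnder (· ≥ ·) fun z => (g z).re := by
  have hsub : {z : ℂ | p.re ≤ z.re} \ {p} ⊆ {p}ᶜ := fun z hz => hz.2
  have hregular := isBoundedUnder_ge_re_of_isBigO_one <|
    (isBigO_one_sub_div_of_tendsto_sub_mul hg hlim).mono (nhdsWithin_mono p hsub)
  obtain ⟨c, hc⟩ := hregular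
  refine ⟨c, ?_⟩
  rw [eventually_map] at hc ⊢
  filter_upwards [hc, self_mem_nhdsWithin] with z hz hzp
  have hre : p.re ≤ z.re := hzp.1
  have hprincipal : 0 ≤ ((a : ℂ) / (z - p)).re := by
    rw [Complex.div_re]
    simpa using div_nonneg (mul_nonneg ha (sub_nonneg.2 hre)) (Complex.normSq_nonneg (z - p))
  rw [Complex.sub_re] at hz
  linarith

lemma isBoundedUnder_ge_re_nhdsWithin_conj (hconj : ∀ z, g (conj z) = conj (g z))
    (hg : (𝓝[{z | 0 ≤ z.re} \ {p}] p).IsBoundedUnder (· ≥ ·) fun z => (g z).re) :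
    (𝓝[{z | 0 ≤ z.re} \ {conj p}] (conj p)).IsBoundedUnder (· ≥ ·) fun z => (g z).re := by
  have hmaps : Set.MapsTo conj ({z : ℂ | 0 ≤ z.re} \ {conj p}) ({z | 0 ≤ z.re} \ {p}) := by
    rintro z ⟨hz, hzp⟩
    exact ⟨by simpa using hz, fun h => hzp (by simp [← Set.mem_singleton_iff.1 h])⟩
  have htendsto := (Complex.continuous_conj.continuousWithinAt (x := conj p)).tendsto_nhdsWithin
    hmaps
  rw [Complex.conj_conj] at htendsto
  simpa only [Function.comp_def, hconj, Complex.conj_re] using htendsto.isBoundedUnder_comp hg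

end SimplePole

section RationalFunction

open Bornology
open scoped ComplexConjugate

variable {f : RatFunc ℝ} {s : ℂ}

lemma differentiableAt_evalC (hs : ¬ IsPoleAt f s) : DifferentiableAt ℂ (evalC f) s := by
  have hdiff (p : ℝ[X]) : DifferentiableAt ℂ (fun z => p.eval₂ (algebraMap ℝ ℂ) z) s := by
    simpa only [eval_map] using (p.map (algebraMap ℝ ℂ)).differentiableAt
  exact (hdiff f.num).div (hdiff f.denom) hs

lemma evalC_conj (f : RatFunc ℝ) (s : ℂ) : evalC f (conj s) = conj (evalC f s) := by
  simp only [evalC, RatFunc.eval, ← aeval_def, aeval_conj, map_div₀]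

lemma evalC_zero (f : RatFunc ℝ) : evalC f 0 = (f.eval (RingHom.id ℝ) 0 : ℝ) := by
  simp [evalC, RatFunc.eval, eval₂_at_zero]

lemma isPoleAt_conj : IsPoleAt f (conj s) ↔ IsPoleAt f s := by
  simp only [IsPoleAt, ← aeval_def, aeval_conj, map_eq_zero]

lemma finite_setOfPred_isPoleAt (f : RatFunc ℝ) : {s | IsPoleAt f s}.Finite := by
  simpa only [IsPoleAt, IsRoot.def, eval_map] using
    finite_setOfPred_isRoot (map_ne_zero (f := algebraMap ℝ ℂ) f.denom_ne_zero)

lemma degree_num_sub_C_atInfinity_mul_denom_lt (hf : f.num.degree ≤ f.denom.degree) :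
    (f.num - C (atInfinity f) * f.denom).degree < f.denom.degree := by
  rw [atInfinity]
  split_ifs with heq
  · have hnum : f.num ≠ 0 := by
      rw [← degree_ne_bot, heq, degree_ne_bot]
      exact f.denom_ne_zero
    have hden : f.denom.leadingCoeff ≠ 0 := leadingCoeff_ne_zero.2 f.denom_ne_zero
    have hquot : f.num.leadingCoeff / f.denom.leadingCoeff ≠ 0 :=
      div_ne_zero (leadingCoeff_ne_zero.2 hnum) hden
    rw [← heq]
    refine degree_sub_lt_left (by rw [degree_C_mul hquot, heq]) hnum ?_
    rw [leadingCoeff_mul, leadingCoeff_C, div_mul_cancel₀ _ hden]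
  · simpa using hf.lt_of_ne heq

lemma isBigO_inv_of_degree_lt {𝕜 : Type*} [NormedField 𝕜] {P Q : 𝕜[X]} (h : P.degree < Q.degree) :
    (fun s => P.eval s / Q.eval s) =O[cobounded 𝕜] fun s => s⁻¹ := by
  have hXP : (X * P).degree ≤ Q.degree := by
    rw [X_mul, degree_mul_X]
    exact Nat.WithBot.add_one_le_of_lt h
  have hO := (isBigO_cobounded_of_degree_le hXP).mul
    (Asymptotics.isBigO_refl (fun s => (s * Q.eval s)⁻¹) (cobounded 𝕜))
  have hQ : ∀ᶠ s in cobounded 𝕜, ¬ Q.IsRoot s :=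
    (finite_setOfPred_isRoot (ne_zero_of_degree_gt h)).isBounded
  refine hO.congr' ?_ ?_ <;>
    filter_upwards [hQ, eventually_ne_cobounded 0] with s hs hs0 <;>
    rw [IsRoot.def] at hs
  · simp only [eval_mul, eval_X]
    field_simp
  · field_simp

lemma isBigO_evalC_sub_atInfinity (hf : f.num.degree ≤ f.denom.degree) :
    (fun s => evalC f s - atInfinity f) =O[cobounded ℂ] fun s => s⁻¹ := by
  have hdeg := degree_num_sub_C_atInfinity_mul_denom_lt hf
  rw [← degree_map (p := f.denom) (algebraMap ℝ ℂ), ← degree_map _ (algebraMap ℝ ℂ)] at hdeg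
  refine (isBigO_inv_of_degree_lt hdeg).congr' ?_ .rfl
  have hpole : ∀ᶠ s in cobounded ℂ, ¬ IsPoleAt f s := (finite_setOfPred_isPoleAt f).isBounded
  filter_upwards [hpole] with s hs
  have hs : f.denom.eval₂ (algebraMap ℝ ℂ) s ≠ 0 := hs
  simp only [eval_map, eval₂_sub, eval₂_mul, eval₂_C, sub_div, mul_div_cancel_right₀ _ hs]
  rfl

end RationalFunction

section TransferMatrix

open Bornology
open scoped ComplexConjugate

variable {G : Matrix (Fin n) (Fin n) (RatFunc ℝ)} {s : ℂ}

lemma finite_setOfPred_hasPole (G : Matrix (Fin n) (Fin n) (RatFunc ℝ)) :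
    {s | HasPole G s}.Finite := by
  simp only [HasPole, Set.ofPred_exists]
  exact Set.finite_iUnion fun i => Set.finite_iUnion fun j => finite_setOfPred_isPoleAt (G i j)

lemma hasPole_conj : HasPole G (conj s) ↔ HasPole G s := by
  simp only [HasPole, isPoleAt_conj]

lemma evalM_conj (G : Matrix (Fin n) (Fin n) (RatFunc ℝ)) (s : ℂ) :
    evalM G (conj s) = (evalM G s).map conj := by
  ext i j
  exact evalC_conj (G i j) s

lemma evalM_zero (G : Matrix (Fin n) (Fin n) (RatFunc ℝ)) :
    evalM G 0 = (evalR G 0).map Complex.ofReal := by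
  ext i j
  exact evalC_zero (G i j)

lemma continuousAt_evalM (hs : ¬ HasPole G s) : ContinuousAt (evalM G) s :=
  tendsto_pi_nhds.2 fun i => tendsto_pi_nhds.2 fun j =>
    (differentiableAt_evalC fun h => hs ⟨i, j, h⟩).continuousAt

lemma tendsto_evalM_cobounded (hG : Proper G) :
    Tendsto (evalM G) (cobounded ℂ) (𝓝 ((evalInf G).map Complex.ofReal)) :=
  tendsto_pi_nhds.2 fun i => tendsto_pi_nhds.2 fun j => tendsto_sub_nhds_zero_iff.1 <|
    (isBigO_evalC_sub_atInfinity (hG i j)).trans_tendsto tendsto_inv₀_cobounded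

lemma conj_jw (ω : ℝ) : conj (jw ω) = jw (-ω) := by
  simp [jw]

lemma eq_jw_im_of_re_eq_zero (hs : s.re = 0) : s = jw s.im := by
  apply Complex.ext <;> simp [jw, hs]

lemma tendsto_jw_nhds_zero : Tendsto jw (𝓝[>] 0) (𝓝 0) := by
  have hcont : Continuous jw := by unfold jw; fun_prop
  exact (hcont.tendsto' 0 0 (by simp [jw])).mono_left nhdsWithin_le_nhds

lemma tendsto_jw_cobounded : Tendsto jw atTop (cobounded ℂ) := by
  rw [← tendsto_norm_atTop_iff_cobounded]
  simpa [jw] using tendsto_abs_atTop_atTop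

end TransferMatrix

section Symmetry

variable {α ι : Type*} {l : Filter α} [l.NeBot]

lemma posSemidef_of_tendsto {𝕜 : Type*} [RCLike 𝕜] [Finite ι] {M : α → Matrix ι ι 𝕜}
    {M₀ : Matrix ι ι 𝕜}
    (hM : ∀ᶠ a in l, (M a).PosSemidef) (hlim : Tendsto M l (𝓝 M₀)) : M₀.PosSemidef := by
  cases nonempty_fintype ι
  refine .of_dotProduct_mulVec_nonneg ?_ fun x => ?_
  · refine tendsto_nhds_unique ((continuous_id.matrix_conjTranspose.tendsto M₀).comp hlim) ?_
    exact hlim.congr' (hM.mono fun a ha => ha.isHermitian.symm)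
  · have hcont : Continuous fun N : Matrix ι ι 𝕜 => star x ⬝ᵥ (N *ᵥ x) := by fun_prop
    exact ge_of_tendsto ((hcont.tendsto M₀).comp hlim)
      (hM.mono fun a ha => ha.dotProduct_mulVec_nonneg x)

lemma continuous_niKer : Continuous (niKer (n := n)) := by
  unfold niKer
  fun_prop

lemma isSymm_of_posSemidef_niKer_map_ofReal {A : Matrix (Fin n) (Fin n) ℝ}
    (hA : (niKer (A.map Complex.ofReal)).PosSemidef) : A.IsSymm := by
  have htrace : (niKer (A.map Complex.ofReal)).trace = 0 := by
    simp [niKer, trace]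
  have hzero : niKer (A.map Complex.ofReal) = 0 := hA.trace_eq_zero_iff.1 htrace
  ext i j
  simpa [niKer, sub_eq_zero, eq_comm] using congrFun₂ hzero i j

lemma isSymm_of_tendsto_of_posSemidef_niKer {M : α → Matrix (Fin n) (Fin n) ℂ}
    {A : Matrix (Fin n) (Fin n) ℝ} (hM : ∀ᶠ a in l, (niKer (M a)).PosSemidef)
    (hlim : Tendsto M l (𝓝 (A.map Complex.ofReal))) : A.IsSymm :=
  isSymm_of_posSemidef_niKer_map_ofReal <|
    posSemidef_of_tendsto hM ((continuous_niKer.tendsto _).comp hlim)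

variable {G : Matrix (Fin n) (Fin n) (RatFunc ℝ)}

theorem isSymm_evalR_zero (hNI : IsNI G) (h0 : ¬ HasPole G 0) : (evalR G 0).IsSymm := by
  obtain ⟨-, -, hker, -⟩ := hNI
  refine isSymm_of_tendsto_of_posSemidef_niKer (l := 𝓝[>] 0) (M := fun ω => evalM G (jw ω)) ?_ ?_
  · have hpole : ∀ᶠ s in 𝓝 (0 : ℂ), ¬ HasPole G s :=
      (finite_setOfPred_hasPole G).isClosed.isOpen_compl.mem_nhds h0
    filter_upwards [self_mem_nhdsWithin, tendsto_jw_nhds_zero.eventually hpole] using hker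
  · rw [← evalM_zero]
    exact (continuousAt_evalM h0).tendsto.comp tendsto_jw_nhds_zero

theorem isSymm_evalInf (hNI : IsNI G) : (evalInf G).IsSymm := by
  obtain ⟨hproper, -, hker, -⟩ := hNI
  refine isSymm_of_tendsto_of_posSemidef_niKer (M := fun ω => evalM G (jw ω)) ?_
    ((tendsto_evalM_cobounded hproper).comp tendsto_jw_cobounded)
  have hpole : ∀ᶠ s in Bornology.cobounded ℂ, ¬ HasPole G s :=
    (finite_setOfPred_hasPole G).isBounded
  filter_upwards [eventually_gt_atTop 0, tendsto_jw_cobounded.eventually hpole] using hker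

end Symmetry

section QuadraticForm

open scoped ComplexConjugate

variable {ι : Type*} [Fintype ι] (x : ι → ℝ)

/-- The complex number `xᵀ M x` attached to a real vector `x` and a complex matrix `M`, as a linear
map in `M`. The vector is real so that conjugating `M` entrywise conjugates the value. -/
def realVecForm : Matrix ι ι ℂ →ₗ[ℂ] ℂ where
  toFun M := (Complex.ofReal ∘ x) ⬝ᵥ (M *ᵥ (Complex.ofReal ∘ x))
  map_add' M N := by rw [add_mulVec, dotProduct_add]
  map_smul' c M := by rw [smul_mulVec, dotProduct_smul, RingHom.id_apply]

lemma realVecForm_apply (M : Matrix ι ι ℂ) :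
    realVecForm x M = ∑ i, ∑ j, (x i : ℂ) * x j * M i j := by
  simp [realVecForm, dotProduct, mulVec, Finset.mul_sum, mul_assoc, mul_comm (M _ _)]

lemma realVecForm_map_ofReal (A : Matrix ι ι ℝ) :
    realVecForm x (A.map Complex.ofReal) = (x ⬝ᵥ (A *ᵥ x) : ℝ) := by
  simp [realVecForm_apply, dotProduct, mulVec, Finset.mul_sum, mul_assoc, mul_comm (A _ _)]

lemma realVecForm_map_conj (M : Matrix ι ι ℂ) :
    realVecForm x (M.map conj) = conj (realVecForm x M) := by
  simp [realVecForm_apply]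

lemma realVecForm_transpose (M : Matrix ι ι ℂ) : realVecForm x Mᵀ = realVecForm x M := by
  rw [realVecForm_apply, realVecForm_apply, Finset.sum_comm]
  simp only [transpose_apply]
  exact Finset.sum_congr rfl fun i _ => Finset.sum_congr rfl fun j _ => by ring

lemma realVecForm_conjTranspose (M : Matrix ι ι ℂ) :
    realVecForm x Mᴴ = conj (realVecForm x M) := by
  rw [← realVecForm_map_conj, ← realVecForm_transpose]
  rfl

variable {x}

lemma realVecForm_nonneg {M : Matrix ι ι ℂ} (hM : M.PosSemidef) : 0 ≤ realVecForm x M := by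
  have hstar : star (Complex.ofReal ∘ x) = Complex.ofReal ∘ x := by ext i; simp
  have hnonneg := hM.dotProduct_mulVec_nonneg (Complex.ofReal ∘ x)
  rwa [hstar] at hnonneg

lemma continuous_realVecForm : Continuous (realVecForm x) := by
  change Continuous fun M : Matrix ι ι ℂ => (Complex.ofReal ∘ x) ⬝ᵥ (M *ᵥ (Complex.ofReal ∘ x))
  fun_prop

lemma im_realVecForm_nonpos_of_posSemidef_niKer {y : Fin n → ℝ} {M : Matrix (Fin n) (Fin n) ℂ}
    (hM : (niKer M).PosSemidef) : (realVecForm y M).im ≤ 0 := by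
  have hre : 0 ≤ (realVecForm y (niKer M)).re := (Complex.le_def.1 (realVecForm_nonneg hM)).1
  have hform : (realVecForm y (niKer M)).re = -2 * (realVecForm y M).im := by
    simp only [niKer, map_smul, map_sub, realVecForm_conjTranspose, smul_eq_mul,
      Complex.I_mul_re, Complex.sub_im, Complex.conj_im]
    ring
  linarith

end QuadraticForm

section PositiveRealForm

open Bornology
open scoped ComplexConjugate

variable {G : Matrix (Fin n) (Fin n) (RatFunc ℝ)} {x : Fin n → ℝ} {s : ℂ}

/-- The quadratic form `xᵀ F(s) x` of the transfer matrix `F(s) = s (G(s) - G(∞))`, which is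
positive real when `G` is negative imaginary without poles at the origin. -/
def positiveRealForm (G : Matrix (Fin n) (Fin n) (RatFunc ℝ)) (x : Fin n → ℝ) (s : ℂ) : ℂ :=
  s * realVecForm x (evalM G s - (evalInf G).map Complex.ofReal)

lemma positiveRealForm_conj (G : Matrix (Fin n) (Fin n) (RatFunc ℝ)) (x : Fin n → ℝ) (s : ℂ) :
    positiveRealForm G x (conj s) = conj (positiveRealForm G x s) := by
  have hconj : evalM G (conj s) - (evalInf G).map Complex.ofReal =
      (evalM G s - (evalInf G).map Complex.ofReal).map conj := by
    ext i j
    simp [evalM_conj]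
  rw [positiveRealForm, hconj, realVecForm_map_conj, ← map_mul, positiveRealForm]

lemma differentiableAt_positiveRealForm (hs : ¬ HasPole G s) :
    DifferentiableAt ℂ (positiveRealForm G x) s := by
  have hentry (i j : Fin n) : DifferentiableAt ℂ (evalC (G i j)) s :=
    differentiableAt_evalC fun h => hs ⟨i, j, h⟩
  unfold positiveRealForm
  simp only [realVecForm_apply, Matrix.sub_apply, evalM, of_apply]
  fun_prop

lemma isBigO_positiveRealForm (hG : Proper G) :
    positiveRealForm G x =O[cobounded ℂ] fun _ => (1 : ℝ) := by
  have hform : (fun s => realVecForm x (evalM G s - (evalInf G).map Complex.ofReal))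
      =O[cobounded ℂ] fun s => s⁻¹ := by
    simp only [realVecForm_apply]
    exact .fun_sum fun i _ => .fun_sum fun j _ =>
      (isBigO_evalC_sub_atInfinity (hG i j)).const_mul_left _
  refine ((Asymptotics.isBigO_refl (fun s : ℂ => s) _).mul hform).trans ?_
  refine .of_bound 1 (.of_forall fun s => ?_)
  simpa using mul_inv_le_one

lemma re_positiveRealForm_jw (G : Matrix (Fin n) (Fin n) (RatFunc ℝ)) (x : Fin n → ℝ) (ω : ℝ) :
    (positiveRealForm G x (jw ω)).re = -(ω * (realVecForm x (evalM G (jw ω))).im) := by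
  simp [positiveRealForm, jw, realVecForm_map_ofReal]

lemma re_positiveRealForm_nonneg_of_re_eq_zero (hNI : IsNI G) (hs : ¬ HasPole G s)
    (hre : s.re = 0) : 0 ≤ (positiveRealForm G x s).re := by
  obtain ⟨-, -, hker, -⟩ := hNI
  have hpos {ω : ℝ} (hω : 0 < ω) (hp : ¬ HasPole G (jw ω)) :
      0 ≤ (positiveRealForm G x (jw ω)).re := by
    rw [re_positiveRealForm_jw, ← mul_neg]
    exact mul_nonneg hω.le
      (neg_nonneg.2 (im_realVecForm_nonpos_of_posSemidef_niKer (hker ω hω hp)))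
  rw [eq_jw_im_of_re_eq_zero hre] at hs ⊢
  rcases lt_trichotomy s.im 0 with hneg | hzero | hω
  · rw [← hasPole_conj, conj_jw] at hs
    simpa only [← conj_jw, positiveRealForm_conj, Complex.conj_re] using hpos (neg_pos.2 hneg) hs
  · rw [hzero, re_positiveRealForm_jw, zero_mul, neg_zero]
  · exact hpos hω hs

lemma tendsto_sub_mul_positiveRealForm {ω : ℝ} {R : Matrix (Fin n) (Fin n) ℂ}
    (hR : Tendsto (fun s : ℂ => (s - jw ω) • Complex.I • evalM G s) (𝓝[≠] jw ω) (𝓝 R)) :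
    Tendsto (fun s => (s - jw ω) * positiveRealForm G x s) (𝓝[≠] jw ω)
      (𝓝 (ω * realVecForm x R)) := by
  have hid : Tendsto (fun s : ℂ => s) (𝓝[≠] jw ω) (𝓝 (jw ω)) := nhdsWithin_le_nhds
  have hform := (continuous_realVecForm (x := x)).tendsto R |>.comp hR
  have hsum := ((hid.mul_const (-Complex.I)).mul hform).sub ((hid.sub_const (jw ω)).mul
    (hid.mul_const (realVecForm x ((evalInf G).map Complex.ofReal))))
  refine (hsum.congr fun s => ?_).trans_eq (congrArg 𝓝 ?_)
  · simp only [positiveRealForm, map_sub, Function.comp_apply, map_smul, smul_eq_mul]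
    linear_combination (-(s * (s - jw ω) * realVecForm x (evalM G s))) * Complex.I_mul_I
  · rw [jw]
    linear_combination (-(ω * realVecForm x R)) * Complex.I_mul_I

lemma isBoundedUnder_ge_re_positiveRealForm_of_hasPole (hNI : IsNI G) (h0 : ¬ HasPole G 0)
    (hs : HasPole G s) (hre : s.re = 0) :
    (𝓝[{z | 0 ≤ z.re} \ {s}] s).IsBoundedUnder (· ≥ ·) fun z => (positiveRealForm G x z).re := by
  obtain ⟨-, -, -, hres, -⟩ := hNI
  have hdiff (p : ℂ) : ∀ᶠ z in 𝓝[≠] p, DifferentiableAt ℂ (positiveRealForm G x) z := by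
    filter_upwards [nhdsNE_le_cofinite p (finite_setOfPred_hasPole G).compl_mem_cofinite]
      with z hz using differentiableAt_positiveRealForm hz
  have hpos {ω : ℝ} (hω : 0 < ω) (hp : HasPole G (jw ω)) :
      (𝓝[{z | 0 ≤ z.re} \ {jw ω}] (jw ω)).IsBoundedUnder (· ≥ ·)
        fun z => (positiveRealForm G x z).re := by
    obtain ⟨R, hR, hlim⟩ := hres ω hω hp
    obtain ⟨r, hr, hrR⟩ := RCLike.nonneg_iff_exists_ofReal.1 (realVecForm_nonneg (x := x) hR)
    have hresidue := tendsto_sub_mul_positiveRealForm (x := x) hlim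
    rw [← hrR, RCLike.ofReal_eq_complex_ofReal, ← Complex.ofReal_mul] at hresidue
    have hbdd := isBoundedUnder_ge_re_of_tendsto_sub_mul (mul_nonneg hω.le hr) (hdiff (jw ω))
      hresidue
    simpa [jw] using hbdd
  rw [eq_jw_im_of_re_eq_zero hre] at hs ⊢
  rcases lt_trichotomy s.im 0 with hneg | hzero | hω
  · rw [← hasPole_conj, conj_jw] at hs
    simpa [conj_jw] using isBoundedUnder_ge_re_nhdsWithin_conj (positiveRealForm_conj G x)
      (hpos (neg_pos.2 hneg) hs)
  · exact absurd hs (by simpa [hzero, jw] using h0)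
  · exact hpos hω hs

theorem re_positiveRealForm_nonneg (hNI : IsNI G) (h0 : ¬ HasPole G 0) (hs : 0 < s.re) :
    0 ≤ (positiveRealForm G x s).re :=
  re_nonneg_of_re_nonneg_on_imaginaryAxis (finite_setOfPred_hasPole G)
    (fun p hp => not_lt.1 fun hre => hNI.2.1 p hre hp)
    (fun _ _ hz => differentiableAt_positiveRealForm hz)
    (fun _ hp hre => re_positiveRealForm_nonneg_of_re_eq_zero hNI hp hre)
    (fun _ hp hre => isBoundedUnder_ge_re_positiveRealForm_of_hasPole hNI h0 hp hre)
    (isBoundedUnder_ge_re_of_isBigO_one ((isBigO_positiveRealForm hNI.1).mono inf_le_left)) hs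

theorem dotProduct_evalR_zero_sub_evalInf_mulVec_nonneg (hNI : IsNI G) (h0 : ¬ HasPole G 0)
    (x : Fin n → ℝ) : 0 ≤ x ⬝ᵥ ((evalR G 0 - evalInf G) *ᵥ x) := by
  set φ : ℝ → ℝ := fun t => (realVecForm x (evalM G t - (evalInf G).map Complex.ofReal)).re
  have hpos : ∀ t > 0, 0 ≤ φ t := fun t ht => by
    have hform := re_positiveRealForm_nonneg (x := x) (s := t) hNI h0 (by simpa using ht)
    rw [positiveRealForm, Complex.re_ofReal_mul] at hform
    exact nonneg_of_mul_nonneg_right hform ht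
  have hlim : ContinuousAt φ 0 := by
    have heval : ContinuousAt (fun t : ℝ => evalM G t) 0 :=
      (Complex.ofReal_zero ▸ continuousAt_evalM h0).comp (f := Complex.ofReal)
        Complex.continuous_ofReal.continuousAt
    exact Complex.continuous_re.continuousAt.comp
      (continuous_realVecForm.continuousAt.comp (heval.sub continuousAt_const))
  have hzero : φ 0 = x ⬝ᵥ ((evalR G 0 - evalInf G) *ᵥ x) := by
    simp only [φ, Complex.ofReal_zero, evalM_zero]
    rw [map_sub, realVecForm_map_ofReal, realVecForm_map_ofReal, sub_mulVec, dotProduct_sub,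
      ← Complex.ofReal_sub, Complex.ofReal_re]
  rw [← hzero]
  exact ge_of_tendsto (hlim.tendsto.mono_left nhdsWithin_le_nhds : Tendsto φ (𝓝[>] 0) _)
    (eventually_mem_nhdsWithin.mono hpos)

end PositiveRealForm

/-- static and instantaneous gains of an NI system without poles
at the origin: `G(0) = G(0)ᵀ`, `G(∞) = G(∞)ᵀ` and `G(0) ≥ G(∞)`. -/
theorem ni_static_and_instantaneous_gains {n : ℕ} (G : Matrix (Fin n) (Fin n) (RatFunc ℝ))
    (hNI : IsNI G) (h0 : ¬ HasPole G 0) :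
    (evalR G 0)ᵀ = evalR G 0 ∧ (evalInf G)ᵀ = evalInf G ∧
      (evalR G 0 - evalInf G).PosSemidef := by
  have hsymm0 := isSymm_evalR_zero hNI h0
  have hsymmInf := isSymm_evalInf hNI
  refine ⟨hsymm0, hsymmInf, .of_dotProduct_mulVec_nonneg ?_ fun x => ?_⟩
  · exact isHermitian_iff_isSymm.2 (hsymm0.sub hsymmInf)
  · simpa using dotProduct_evalR_zero_sub_evalInf_mulVec_nonneg hNI h0 x

end NIControl
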